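/- Let d ≥ 4, γ > −1, 2 ≤ p ≤ d, and let k_1,…,k_5 be distinct integers in {1,…,d+1}. Assume m_{(3,1,1)} ≠ m_{(2,2,1)}, set a = ((p−1)/2)·(m_{(4,1)} − m_{(3,2)})/(m_{(3,1,1)} − m_{(2,2,1)}) − 1, assume a > 0 and a ≠ 1, and set A_6 = (m_{(4,1)} − m_{(3,2)}) / (p·a(a−1)²(a+1)). Let A_1,…,A_5 ∈ ℝ. If Σ_{j=1}^5 A_j S_ℓ(v_{k_j}) + A_6 S_ℓ(u_{a,p}) = m_ℓ holds for the five partitions ℓ = (5), (4,1), (3,1,1), (2,1,1,1), (1,1,1,1,1), then it also holds for ℓ = (3,2) and ℓ = (2,2,1), and consequently w_γ ∫_{𝒯^{d+1}} f(ξ) ξ^γ dξ = Σ_{j=1}^5 A_j · avg_{v_{k_j}𝒜_d} f + A_6 · avg_{u_{a,p}𝒜_d} f for every homogeneous polynomial f of degree 5 in d+1 variables. -/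

import Mathlib

open MeasureTheory Finset

/-- The standard simplex `T^d` in `ℝ^d`. -/
def Td (d : ℕ) : Set (Fin d → ℝ) :=
  {x | (∀ i, 0 ≤ x i) ∧ ∑ i, x i ≤ 1}

/-- The weight function `W_γ(x) = (x_1 ⋯ x_d (1 - |x|₁))^γ` on `T^d`. -/
noncomputable def Wg (d : ℕ) (γ : ℝ) (x : Fin d → ℝ) : ℝ :=
  ((∏ i, x i) * (1 - ∑ i, x i)) ^ γ

/-- The normalization constant `w_γ = Γ((d+1)(γ+1)) / Γ(γ+1)^(d+1)`. -/
noncomputable def wg (d : ℕ) (γ : ℝ) : ℝ :=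
  Real.Gamma ((d + 1) * (γ + 1)) / (Real.Gamma (γ + 1)) ^ (d + 1)

/-- Homogeneous coordinates: `x ↦ (x, 1 - |x|₁) ∈ 𝒯^{d+1}`. -/
noncomputable def lift (d : ℕ) (x : Fin d → ℝ) : Fin (d + 1) → ℝ :=
  Fin.snoc x (1 - ∑ i, x i)

/-- Evaluation of the monomial symmetric polynomial with exponent vector `lv`:
the sum of all distinct monomials whose exponent vector is a permutation of `lv`. -/
noncomputable def msymmEval (d : ℕ) (lv : Fin (d + 1) → ℕ) (x : Fin (d + 1) → ℝ) : ℝ :=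
  ∑ β ∈ Finset.image (fun σ : Equiv.Perm (Fin (d + 1)) => lv ∘ σ) Finset.univ,
    ∏ i, x i ^ β i

/-- Pad a list of exponents (a partition) into an exponent vector in `d+1` variables. -/
def pvec (d : ℕ) (l : List ℕ) : Fin (d + 1) → ℕ :=
  fun i => l.getD (i : ℕ) 0

/-- The moment `m_ℓ := w_γ ∫_{𝒯^{d+1}} S_ℓ(ξ) ξ^γ dξ`. -/
noncomputable def momentS (d : ℕ) (γ : ℝ) (lv : Fin (d + 1) → ℕ) : ℝ :=
  wg d γ * ∫ x in Td d, msymmEval d lv (lift d x) * Wg d γ x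

/-- The average of `f` over the set of distinct coordinate permutations of `y`. -/
noncomputable def orbitAvg (d : ℕ) (y : Fin (d + 1) → ℝ) (f : (Fin (d + 1) → ℝ) → ℝ) : ℝ :=
  ((Finset.image (fun σ : Equiv.Perm (Fin (d + 1)) => y ∘ σ) Finset.univ).card : ℝ)⁻¹ *
    ∑ z ∈ Finset.image (fun σ : Equiv.Perm (Fin (d + 1)) => y ∘ σ) Finset.univ, f z

/-- `v_k = (1,…,1,0,…,0)` with `k` ones, in `d+1` coordinates. -/
def vk (d k : ℕ) : Fin (d + 1) → ℝ :=
  fun i => if (i : ℕ) < k then 1 else 0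

/-- `u_{a,p} = (a,1,…,1,0,…,0)` with one entry `a` followed by `p` ones. -/
def uap (d : ℕ) (a : ℝ) (p : ℕ) : Fin (d + 1) → ℝ :=
  fun i => if (i : ℕ) = 0 then a else if (i : ℕ) ≤ p then 1 else 0

/-! Both sides of the cubature formula are linear functionals of `f` invariant under permutations of
the homogeneous coordinates: for the integral, such permutations act on the simplex by affine maps
of determinant `±1`. Hence exactness in degree `5` need only be tested on the seven monomial
symmetric polynomials `S_ℓ` with `ℓ` a partition of `5`. On `0`-`1` vectors the value of `S_ℓ`
depends only on the multiplicities of the parts of `ℓ`, so the differences `S_{4,1} - S_{3,2}` and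
`S_{3,1,1} - S_{2,2,1}` vanish at every `v_k`, while at `u_{a,p}` they equal
`p a (a - 1)² (a + 1)` and `p (p - 1) / 2 · a (a - 1)²`. The choice of `a` and `A_6` makes `A_6`
times these values agree with the differences of the moments, so that two of the seven equations
follow from the other five. -/

section PermutationOrbits

variable {ι α : Type*} [Fintype ι]

lemma exists_perm_of_map_univ_eq {f g : ι → α}
    (h : (Finset.univ : Finset ι).val.map f = (Finset.univ : Finset ι).val.map g) :
    ∃ σ : Equiv.Perm ι, f = g ∘ σ := by
  classical
  have card_fiber_eq (c : α) : Fintype.card {i // f i = c} = Fintype.card {i // g i = c} := by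
    have hcount := congrArg (Multiset.count c) h
    simpa only [Multiset.count_map, eq_comm (a := c), Fintype.card_subtype, Finset.card_def,
      Finset.filter_val] using hcount
  let e (c : α) := Fintype.equivOfCardEq (card_fiber_eq c)
  exact ⟨Equiv.ofFiberEquiv e, funext fun i => (Equiv.ofFiberEquiv_map e i).symm⟩

variable [DecidableEq ι] [DecidableEq α]

/-- The orbit of the family `y` under permutations of the index type. -/
def permOrbit (y : ι → α) : Finset (ι → α) :=
  Finset.univ.image fun σ : Equiv.Perm ι => y ∘ σ

lemma mem_permOrbit {y z : ι → α} : z ∈ permOrbit y ↔ ∃ σ : Equiv.Perm ι, y ∘ σ = z := by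
  simp [permOrbit]

lemma self_mem_permOrbit (y : ι → α) : y ∈ permOrbit y :=
  mem_permOrbit.2 ⟨1, rfl⟩

lemma comp_mem_permOrbit {y z : ι → α} (hz : z ∈ permOrbit y) (σ : Equiv.Perm ι) :
    z ∘ σ ∈ permOrbit y := by
  obtain ⟨τ, rfl⟩ := mem_permOrbit.1 hz
  exact mem_permOrbit.2 ⟨τ * σ, rfl⟩

lemma sum_permOrbit_comp {M : Type*} [AddCommMonoid M] (y : ι → α) (σ : Equiv.Perm ι)
    (f : (ι → α) → M) : ∑ z ∈ permOrbit y, f (z ∘ σ) = ∑ z ∈ permOrbit y, f z :=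
  Finset.sum_nbij' (· ∘ σ) (· ∘ σ.symm) (fun _ hz => comp_mem_permOrbit hz σ)
    (fun _ hz => comp_mem_permOrbit hz σ.symm) (fun z _ => by ext; simp) (fun z _ => by ext; simp)
    fun _ _ => rfl

lemma permOrbit_comp (y : ι → α) (σ : Equiv.Perm ι) : permOrbit (y ∘ σ) = permOrbit y := by
  ext z
  rw [mem_permOrbit, mem_permOrbit]
  exact ((Equiv.mulLeft σ).surjective.exists (p := fun τ => y ∘ τ = z)).symm

end PermutationOrbits

section MonomialSymmetric

open MvPolynomial

variable {ι R : Type*} [CommSemiring R]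

lemma eval_comp_of_isSymmetric {f : MvPolynomial ι R} (hf : f.IsSymmetric) (y : ι → R)
    (σ : Equiv.Perm ι) : eval (y ∘ σ) f = eval y f := by
  rw [← eval_rename, hf σ]

variable [Fintype ι]

lemma rename_prod_X_pow (σ : Equiv.Perm ι) (β : ι → ℕ) :
    rename σ (∏ i, X i ^ (β ∘ σ) i : MvPolynomial ι R) = ∏ i, X i ^ β i := by
  simpa using Equiv.prod_comp σ fun i => (X i ^ β i : MvPolynomial ι R)

variable [DecidableEq ι]

variable (R) in
/-- The monomial symmetric polynomial with exponent vector `β`; unlike `MvPolynomial.msymm`, it is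
indexed by an arbitrary exponent vector instead of a partition. -/
noncomputable def monomialSymm (β : ι → ℕ) : MvPolynomial ι R :=
  ∑ α ∈ permOrbit β, ∏ i, X i ^ α i

lemma isSymmetric_monomialSymm (β : ι → ℕ) : (monomialSymm R β).IsSymmetric := fun σ => by
  simp only [monomialSymm, map_sum]
  rw [← sum_permOrbit_comp β σ]
  simp only [rename_prod_X_pow]

lemma monomialSymm_comp (β : ι → ℕ) (σ : Equiv.Perm ι) :
    monomialSymm R (β ∘ σ) = monomialSymm R β := by
  rw [monomialSymm, permOrbit_comp, monomialSymm]

variable {M : Type*} [AddCommMonoid M] [Module R M]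

/-- Invariance of a linear map on polynomials under permutations of the variables. -/
def IsPermInvariant (L : MvPolynomial ι R →ₗ[R] M) : Prop :=
  ∀ (σ : Equiv.Perm ι) (f : MvPolynomial ι R), L (rename σ f) = L f

lemma IsPermInvariant.map_monomialSymm {L : MvPolynomial ι R →ₗ[R] M} (hL : IsPermInvariant L)
    (β : ι → ℕ) : L (monomialSymm R β) = (permOrbit β).card • L (∏ i, X i ^ β i) := by
  rw [monomialSymm, map_sum, ← Finset.sum_const]
  refine Finset.sum_congr rfl fun α hα => ?_
  obtain ⟨σ, rfl⟩ := mem_permOrbit.1 hα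
  rw [← hL σ, rename_prod_X_pow]

lemma IsPermInvariant.eq_of_eq_monomialSymm [IsAddTorsionFree M]
    {L L' : MvPolynomial ι R →ₗ[R] M} (hL : IsPermInvariant L) (hL' : IsPermInvariant L') {n : ℕ}
    (h : ∀ β : ι → ℕ, ∑ i, β i = n → L (monomialSymm R β) = L' (monomialSymm R β))
    {f : MvPolynomial ι R} (hf : f.IsHomogeneous n) : L f = L' f := by
  rw [f.as_sum, map_sum, map_sum]
  refine Finset.sum_congr rfl fun m hm => ?_
  have hdeg : ∑ i, m i = n := by
    rw [← Finsupp.degree_eq_sum, Finsupp.degree_eq_weight_one]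
    exact hf (mem_support_iff.1 hm)
  have hmono : L (∏ i, X i ^ m i) = L' (∏ i, X i ^ m i) :=
    nsmul_right_injective (Finset.card_pos.2 ⟨_, self_mem_permOrbit m⟩).ne' <| by
      simpa only [hL.map_monomialSymm, hL'.map_monomialSymm] using h m hdeg
  rw [monomial_eq, Finsupp.prod_fintype _ _ fun i => pow_zero _, ← smul_eq_C_mul, map_smul,
    map_smul, hmono]

end MonomialSymmetric

section AugmentedMonomial

open Function

variable {ι κ R : Type*}

lemma extend_zero_eq_of {f : κ ↪ ι} {c : κ → ℕ} {β : ι → ℕ} (hf : β ∘ f = c)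
    (hβ : ∀ i ∉ Set.range f, β i = 0) : extend f c 0 = β := by
  subst hf
  ext i
  by_cases hi : i ∈ Set.range f
  · obtain ⟨j, rfl⟩ := hi
    exact f.injective.extend_apply _ _ j
  · rw [extend_apply' _ _ _ hi, hβ i hi, Pi.zero_apply]

lemma extend_trans_equiv (f : κ ↪ ι) (c : κ → ℕ) (σ : Equiv.Perm ι) :
    extend (f.trans σ.toEmbedding) c 0 = extend f c 0 ∘ σ.symm := by
  refine extend_zero_eq_of (funext fun j => ?_) fun i hi => extend_apply' _ _ _ fun ⟨j, hj⟩ => hi ?_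
  · simp [f.injective.extend_apply]
  · exact ⟨j, by simp [hj]⟩

lemma extend_equiv_trans {f : κ ↪ ι} {c : κ → ℕ} {τ : Equiv.Perm κ} (hτ : c ∘ τ = c) :
    extend (τ.toEmbedding.trans f) c 0 = extend f c 0 := by
  refine extend_zero_eq_of (funext fun j => ?_) fun i hi => extend_apply' _ _ _ fun ⟨j, hj⟩ => hi ?_
  · simpa [f.injective.extend_apply] using congrFun hτ j
  · exact ⟨τ.symm j, by simp [hj]⟩

lemma exists_perm_of_extend_eq [Finite κ] {f g : κ ↪ ι} {c : κ → ℕ} (hc : ∀ j, c j ≠ 0)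
    (h : extend g c 0 = extend f c 0) :
    ∃ τ : Equiv.Perm κ, c ∘ τ = c ∧ τ.toEmbedding.trans f = g := by
  have hval (j : κ) : extend f c 0 (g j) = c j := by rw [← h, g.injective.extend_apply]
  have hrange (j : κ) : ∃ i, f i = g j := by
    by_contra hj
    exact hc j (by rw [← hval, extend_apply' _ _ _ hj, Pi.zero_apply])
  choose τ hτ using hrange
  have hinj : Injective τ := fun i j hij => g.injective (by rw [← hτ, ← hτ, hij])
  refine ⟨Equiv.ofBijective τ (Finite.injective_iff_bijective.1 hinj), funext fun j => ?_,
    DFunLike.ext _ _ hτ⟩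
  rw [← hval j, ← hτ, f.injective.extend_apply]
  rfl

variable [Fintype ι] [Fintype κ]

lemma image_extend_eq_permOrbit [DecidableEq ι] (c : κ → ℕ) (e : κ ↪ ι) :
    (Finset.univ.image fun f : κ ↪ ι => extend f c 0) = permOrbit (extend e c 0) := by
  classical
  ext β
  simp only [Finset.mem_image, Finset.mem_univ, true_and, mem_permOrbit]
  constructor
  · rintro ⟨f, rfl⟩
    obtain ⟨σ, hσ⟩ := Equiv.Perm.exists_extending_pair e f e.injective f.injective
    have hf : e.trans σ.toEmbedding = f := DFunLike.ext _ _ hσ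
    exact ⟨σ.symm, by rw [← extend_trans_equiv, hf]⟩
  · rintro ⟨σ, rfl⟩
    exact ⟨e.trans σ.symm.toEmbedding, extend_trans_equiv e c σ.symm⟩

lemma card_extend_eq [DecidableEq κ] {c : κ → ℕ} (hc : ∀ j, c j ≠ 0) (f : κ ↪ ι) :
    (Finset.univ.filter fun g : κ ↪ ι => extend g c 0 = extend f c 0).card =
      (Finset.univ.filter fun τ : Equiv.Perm κ => c ∘ τ = c).card := by
  refine (Finset.card_bij (fun τ _ => τ.toEmbedding.trans f) (fun τ hτ => ?_)
    (fun τ _ τ' _ h => ?_) fun g hg => ?_).symm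
  · simpa using extend_equiv_trans (by simpa using hτ)
  · exact Equiv.ext fun j => f.injective (DFunLike.congr_fun h j)
  · simpa using exists_perm_of_extend_eq hc (by simpa using hg)

lemma prod_pow_extend [CommMonoid R] (f : κ ↪ ι) (c : κ → ℕ) (x : ι → R) :
    ∏ i, x i ^ extend f c 0 i = ∏ j, x (f j) ^ c j := by
  classical
  refine .trans (Finset.prod_subset (Finset.univ.map f).subset_univ fun i _ hi => ?_).symm ?_
  · rw [extend_apply' _ _ _ (by simpa using hi), Pi.zero_apply, pow_zero]
  · simp [f.injective.extend_apply]

variable [CommRing R]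

/-- The augmented monomial symmetric polynomial with exponents `c`, evaluated at `x`: the sum of the
monomials obtained by attaching the exponents to pairwise distinct variables, each monomial counted
once for every such attachment. -/
noncomputable def augMonomialSymm (c : κ → ℕ) (x : ι → R) : R :=
  ∑ f : κ ↪ ι, ∏ j, x (f j) ^ c j

lemma augMonomialSymm_eq_card_mul [DecidableEq ι] [DecidableEq κ] {c : κ → ℕ}
    (hc : ∀ j, c j ≠ 0) (e : κ ↪ ι) (x : ι → R) :
    augMonomialSymm c x = (Finset.univ.filter fun τ : Equiv.Perm κ => c ∘ τ = c).card *
      ∑ β ∈ permOrbit (extend e c 0), ∏ i, x i ^ β i := by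
  simp only [augMonomialSymm, ← prod_pow_extend]
  rw [Finset.sum_comp (fun β : ι → ℕ => ∏ i, x i ^ β i) fun f : κ ↪ ι => extend f c 0,
    image_extend_eq_permOrbit c e, Finset.mul_sum]
  refine Finset.sum_congr rfl fun β hβ => ?_
  obtain ⟨f, -, rfl⟩ := Finset.mem_image.1 (image_extend_eq_permOrbit c e ▸ hβ)
  rw [card_extend_eq hc, nsmul_eq_mul]

lemma sum_notMem_range [DecidableEq ι] (e : κ ↪ ι) (g : ι → R) :
    ∑ i : {i // i ∉ Set.range e}, g i = ∑ i, g i - ∑ j, g (e j) := by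
  rw [eq_sub_iff_add_eq', ← Fintype.sum_subtype_add_sum_subtype (· ∈ Set.range e) g]
  congr 1
  convert Equiv.sum_comp (Equiv.ofInjective e e.injective) fun i => g i
  rfl

lemma augMonomialSymm_cons {r : ℕ} (a : ℕ) (c : Fin r → ℕ) (x : ι → R) :
    augMonomialSymm (Fin.cons a c) x =
      (∑ i, x i ^ a) * augMonomialSymm c x - ∑ j, augMonomialSymm (c + Pi.single j a) x := by
  classical
  have mul_prod_pow (e : Fin r ↪ ι) (j : Fin r) :
      ∏ k, x (e k) ^ (c + Pi.single j a : Fin r → ℕ) k = x (e j) ^ a * ∏ k, x (e k) ^ c k := by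
    simp only [Pi.add_apply, pow_add, Finset.prod_mul_distrib]
    rw [mul_comm, Fintype.prod_eq_single j fun k hk => by simp [hk], Pi.single_eq_same]
  simp only [augMonomialSymm]
  rw [Fintype.sum_equiv (Equiv.embeddingFinSucc r ι) _
    (fun e => x e.2 ^ a * ∏ j, x (e.1 j) ^ c j) fun f => by simp [Fin.prod_univ_succ],
    Fintype.sum_sigma, Finset.mul_sum, Finset.sum_comm, ← Finset.sum_sub_distrib]
  refine Finset.sum_congr rfl fun e _ => ?_
  simp only [mul_prod_pow]
  rw [← Finset.sum_mul, ← Finset.sum_mul, sum_notMem_range e fun i => x i ^ a, sub_mul]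

lemma augMonomialSymm_of_isIdempotentElem {c : κ → ℕ} (hc : ∀ j, c j ≠ 0) {x : ι → R}
    (hx : ∀ i, IsIdempotentElem (x i)) : augMonomialSymm c x = augMonomialSymm (1 : κ → ℕ) x := by
  simp only [augMonomialSymm, (hx _).pow_eq (hc _), Pi.one_apply, pow_one]

end AugmentedMonomial

section Partitions

variable {d : ℕ}

lemma pvec_ofFn {r : ℕ} (hr : r ≤ d + 1) (c : Fin r → ℕ) :
    pvec d (List.ofFn c) = Function.extend (Fin.castLEEmb hr) c 0 := by
  refine (extend_zero_eq_of (funext fun j => by simp [pvec]) fun i hi => ?_).symm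
  exact List.getD_eq_default _ _ (not_lt.1 fun h => hi ⟨⟨i, by simpa using h⟩, rfl⟩)

lemma map_univ_pvec {l : List ℕ} (hl : l.length ≤ d + 1) :
    Finset.univ.val.map (pvec d l) =
      (l : Multiset ℕ) + Multiset.replicate (d + 1 - l.length) 0 := by
  rw [Fin.univ_val_map, ← Multiset.coe_replicate, Multiset.coe_add]
  refine congrArg _ (List.ext_getElem (by simp [hl]) fun i _ _ => ?_)
  rw [List.getElem_ofFn, List.getElem_append]
  split_ifs with hi
  · exact List.getD_eq_getElem l 0 hi
  · simpa [pvec] using List.getD_eq_default l 0 (not_lt.1 hi)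

lemma exists_perm_eq_pvec_comp (β : Fin (d + 1) → ℕ) :
    ∃ l : List ℕ, l.Pairwise (· ≥ ·) ∧ 0 ∉ l ∧ l.sum = ∑ i, β i ∧ l.length ≤ d + 1 ∧
      ∃ σ : Equiv.Perm (Fin (d + 1)), β = pvec d l ∘ σ := by
  let s := Finset.univ.val.map β
  let l := (s.filter (· ≠ 0)).sort (· ≥ ·)
  have hl : (l : Multiset ℕ) = s.filter (· ≠ 0) := Multiset.sort_eq _ _
  have hs : s = (l : Multiset ℕ) + Multiset.replicate (s.count 0) 0 := by
    rw [hl, ← Multiset.filter_eq', add_comm, Multiset.filter_add_not]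
  have hcard : d + 1 = l.length + s.count 0 := by simpa [s] using congrArg Multiset.card hs
  have hlen : l.length ≤ d + 1 := by omega
  refine ⟨l, Multiset.pairwise_sort _ _, fun h => ?_, ?_, hlen, exists_perm_of_map_univ_eq ?_⟩
  · simp [l] at h
  · have hsum := congrArg Multiset.sum hs
    rw [Multiset.sum_add, Multiset.sum_replicate, smul_zero, add_zero, Multiset.sum_coe] at hsum
    exact hsum.symm
  · rw [map_univ_pvec hlen, show d + 1 - l.length = s.count 0 by omega]
    exact hs

lemma IsPermInvariant.eq_of_eq_monomialSymm_pvec {R M : Type*} [CommSemiring R] [AddCommMonoid M]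
    [Module R M] [IsAddTorsionFree M] {L L' : MvPolynomial (Fin (d + 1)) R →ₗ[R] M}
    (hL : IsPermInvariant L) (hL' : IsPermInvariant L') {n : ℕ}
    (h : ∀ l : List ℕ, l.Pairwise (· ≥ ·) → 0 ∉ l → l.sum = n → l.length ≤ d + 1 →
      L (monomialSymm R (pvec d l)) = L' (monomialSymm R (pvec d l)))
    {f : MvPolynomial (Fin (d + 1)) R} (hf : f.IsHomogeneous n) : L f = L' f := by
  refine hL.eq_of_eq_monomialSymm hL' (fun β hβ => ?_) hf
  obtain ⟨l, hl, h0, hsum, hlen, σ, rfl⟩ := exists_perm_eq_pvec_comp β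
  rw [monomialSymm_comp, h l hl h0 (hsum.trans hβ) hlen]

lemma mem_partitions_five {l : List ℕ} (hl : l.Pairwise (· ≥ ·)) (h0 : 0 ∉ l) (hsum : l.sum = 5) :
    l ∈ [[5], [4, 1], [3, 1, 1], [2, 1, 1, 1], [1, 1, 1, 1, 1]] ++ [[3, 2], [2, 2, 1]] := by
  rcases l with _ | ⟨a, _ | ⟨b, _ | ⟨c, _ | ⟨e, _ | ⟨f, _ | ⟨g, l⟩⟩⟩⟩⟩⟩ <;> simp at hl h0 hsum ⊢ <;>
    omega

end Partitions

section PowerSums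

variable {ι R : Type*} [Fintype ι] [CommRing R]

lemma augMonomialSymm_pair (a b : ℕ) (x : ι → R) :
    augMonomialSymm ![a, b] x = (∑ i, x i ^ a) * ∑ i, x i ^ b - ∑ i, x i ^ (a + b) := by
  have single (c : ℕ) : augMonomialSymm ![c] x = ∑ i, x i ^ c := by
    simpa [augMonomialSymm] using augMonomialSymm_cons c ![] x
  have hadd : ![b] + Pi.single 0 a = ![a + b] := by
    ext j; fin_cases j; simp [add_comm]
  refine (augMonomialSymm_cons a ![b] x).trans ?_
  rw [Fin.sum_univ_one, hadd, single, single]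

lemma augMonomialSymm_triple (a b c : ℕ) (x : ι → R) :
    augMonomialSymm ![a, b, c] x =
      (∑ i, x i ^ a) * (∑ i, x i ^ b) * (∑ i, x i ^ c)
        - (∑ i, x i ^ (a + b)) * (∑ i, x i ^ c) - (∑ i, x i ^ (a + c)) * (∑ i, x i ^ b)
        - (∑ i, x i ^ (b + c)) * (∑ i, x i ^ a) + 2 * ∑ i, x i ^ (a + b + c) := by
  have hadd₀ : ![b, c] + Pi.single 0 a = ![a + b, c] := by
    ext j; fin_cases j <;> simp [add_comm]
  have hadd₁ : ![b, c] + Pi.single 1 a = ![b, a + c] := by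
    ext j; fin_cases j <;> simp [add_comm]
  refine (augMonomialSymm_cons a ![b, c] x).trans ?_
  rw [Fin.sum_univ_two, hadd₀, hadd₁]
  simp only [augMonomialSymm_pair]
  rw [add_left_comm b a c, ← add_assoc a b c]
  ring

end PowerSums

section Nodes

variable {d : ℕ}

lemma augMonomialSymm_eq_card_mul_msymmEval {r : ℕ} (hr : r ≤ d + 1) {c : Fin r → ℕ}
    (hc : ∀ j, c j ≠ 0) (x : Fin (d + 1) → ℝ) :
    augMonomialSymm c x = (Finset.univ.filter fun τ : Equiv.Perm (Fin r) => c ∘ τ = c).card *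
      msymmEval d (pvec d (List.ofFn c)) x := by
  rw [augMonomialSymm_eq_card_mul hc (Fin.castLEEmb hr), ← pvec_ofFn]
  rfl

lemma augMonomialSymm_four_one (hd : 1 ≤ d) (x : Fin (d + 1) → ℝ) :
    augMonomialSymm ![4, 1] x = msymmEval d (pvec d [4, 1]) x := by
  rw [augMonomialSymm_eq_card_mul_msymmEval (by omega) (by decide), show
    (Finset.univ.filter fun τ : Equiv.Perm (Fin 2) => ![4, 1] ∘ τ = ![4, 1]).card = 1 by decide]
  simp

lemma augMonomialSymm_three_two (hd : 1 ≤ d) (x : Fin (d + 1) → ℝ) :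
    augMonomialSymm ![3, 2] x = msymmEval d (pvec d [3, 2]) x := by
  rw [augMonomialSymm_eq_card_mul_msymmEval (by omega) (by decide), show
    (Finset.univ.filter fun τ : Equiv.Perm (Fin 2) => ![3, 2] ∘ τ = ![3, 2]).card = 1 by decide]
  simp

lemma augMonomialSymm_three_one_one (hd : 2 ≤ d) (x : Fin (d + 1) → ℝ) :
    augMonomialSymm ![3, 1, 1] x = 2 * msymmEval d (pvec d [3, 1, 1]) x := by
  rw [augMonomialSymm_eq_card_mul_msymmEval (by omega) (by decide), show
    (Finset.univ.filter fun τ : Equiv.Perm (Fin 3) => ![3, 1, 1] ∘ τ = ![3, 1, 1]).card = 2 by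
      decide]
  simp

lemma augMonomialSymm_two_two_one (hd : 2 ≤ d) (x : Fin (d + 1) → ℝ) :
    augMonomialSymm ![2, 2, 1] x = 2 * msymmEval d (pvec d [2, 2, 1]) x := by
  rw [augMonomialSymm_eq_card_mul_msymmEval (by omega) (by decide), show
    (Finset.univ.filter fun τ : Equiv.Perm (Fin 3) => ![2, 2, 1] ∘ τ = ![2, 2, 1]).card = 2 by
      decide]
  simp

lemma isIdempotentElem_vk (k : ℕ) (i : Fin (d + 1)) : IsIdempotentElem (vk d k i) := by
  rw [IsIdempotentElem.iff_eq_zero_or_one]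
  simp only [vk]
  split_ifs <;> simp

lemma msymmEval_vk_four_one (hd : 1 ≤ d) (k : ℕ) :
    msymmEval d (pvec d [4, 1]) (vk d k) = msymmEval d (pvec d [3, 2]) (vk d k) := by
  rw [← augMonomialSymm_four_one hd, ← augMonomialSymm_three_two hd,
    augMonomialSymm_of_isIdempotentElem (c := ![4, 1]) (by decide) (isIdempotentElem_vk k),
    augMonomialSymm_of_isIdempotentElem (c := ![3, 2]) (by decide) (isIdempotentElem_vk k)]

lemma msymmEval_vk_three_one_one (hd : 2 ≤ d) (k : ℕ) :
    msymmEval d (pvec d [3, 1, 1]) (vk d k) = msymmEval d (pvec d [2, 2, 1]) (vk d k) := by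
  refine mul_left_cancel₀ (two_ne_zero (α := ℝ)) ?_
  rw [← augMonomialSymm_three_one_one hd, ← augMonomialSymm_two_two_one hd,
    augMonomialSymm_of_isIdempotentElem (c := ![3, 1, 1]) (by decide) (isIdempotentElem_vk k),
    augMonomialSymm_of_isIdempotentElem (c := ![2, 2, 1]) (by decide) (isIdempotentElem_vk k)]

lemma sum_uap_pow {p : ℕ} (hp : p ≤ d) (a : ℝ) {n : ℕ} (hn : n ≠ 0) :
    ∑ i, uap d a p i ^ n = a ^ n + p := by
  have uap_succ_pow (i : Fin d) : uap d a p i.succ ^ n = if (i : ℕ) < p then 1 else 0 := by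
    simp only [uap, Fin.val_succ, Nat.succ_ne_zero, if_false, Nat.succ_le_iff, ite_pow, one_pow,
      zero_pow hn]
  have card_lt : (Finset.univ.filter fun i : Fin d => (i : ℕ) < p).card = p := by
    rw [Fin.card_filter_val_lt, min_eq_right hp]
  rw [Fin.sum_univ_succ]
  simp only [uap_succ_pow, Finset.sum_boole, card_lt]
  simp [uap]

lemma msymmEval_uap_four_one_sub {p : ℕ} (hd : 1 ≤ d) (hp : p ≤ d) (a : ℝ) :
    msymmEval d (pvec d [4, 1]) (uap d a p) - msymmEval d (pvec d [3, 2]) (uap d a p) =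
      p * a * (a - 1) ^ 2 * (a + 1) := by
  simp only [← augMonomialSymm_four_one hd, ← augMonomialSymm_three_two hd, augMonomialSymm_pair,
    sum_uap_pow hp a (Nat.succ_ne_zero _)]
  ring

lemma msymmEval_uap_three_one_one_sub {p : ℕ} (hd : 2 ≤ d) (hp : p ≤ d) (a : ℝ) :
    msymmEval d (pvec d [3, 1, 1]) (uap d a p) - msymmEval d (pvec d [2, 2, 1]) (uap d a p) =
      p * (p - 1) / 2 * a * (a - 1) ^ 2 := by
  refine mul_left_cancel₀ (two_ne_zero (α := ℝ)) ?_
  rw [mul_sub]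
  simp only [← augMonomialSymm_three_one_one hd, ← augMonomialSymm_two_two_one hd,
    augMonomialSymm_triple, sum_uap_pow hp a (Nat.succ_ne_zero _)]
  ring

end Nodes

section Simplex

variable {d : ℕ}

lemma lift_castSucc (x : Fin d → ℝ) (i : Fin d) : lift d x i.castSucc = x i := by
  simp [lift]

lemma lift_last (x : Fin d → ℝ) : lift d x (Fin.last d) = 1 - ∑ i, x i := by
  simp [lift]

lemma sum_lift (x : Fin d → ℝ) : ∑ i, lift d x i = 1 := by
  simp [lift, Fin.sum_univ_castSucc]

lemma lift_init_lift_comp (x : Fin d → ℝ) (σ : Equiv.Perm (Fin (d + 1))) :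
    lift d (Fin.init (lift d x ∘ σ)) = lift d x ∘ σ := by
  have hsum : ∑ i, (lift d x ∘ σ) i = 1 := (Equiv.sum_comp σ (lift d x)).trans (sum_lift x)
  rw [Fin.sum_univ_castSucc] at hsum
  have hlast : 1 - ∑ i, Fin.init (lift d x ∘ σ) i = (lift d x ∘ σ) (Fin.last d) :=
    sub_eq_of_eq_add' hsum.symm
  rw [lift, hlast, Fin.snoc_init_self]

lemma mem_Td_iff {x : Fin d → ℝ} : x ∈ Td d ↔ ∀ i, 0 ≤ lift d x i := by
  simp [Td, Fin.forall_fin_succ', lift_castSucc, lift_last]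

lemma Wg_eq_prod_lift_rpow (γ : ℝ) (x : Fin d → ℝ) : Wg d γ x = (∏ i, lift d x i) ^ γ := by
  simp [Wg, Fin.prod_univ_castSucc, lift_castSucc, lift_last]

/-- The map `lift d` as an affine map. -/
noncomputable def liftAffine (d : ℕ) : (Fin d → ℝ) →ᵃ[ℝ] (Fin (d + 1) → ℝ) :=
  AffineMap.pi <| Fin.snoc (fun i => AffineMap.proj i)
    (AffineMap.const ℝ _ 1 - (∑ i, LinearMap.proj i : (Fin d → ℝ) →ₗ[ℝ] ℝ).toAffineMap)

lemma coe_liftAffine : ⇑(liftAffine d) = lift d := by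
  ext x i
  induction i using Fin.lastCases <;> simp [liftAffine, lift]

lemma continuous_lift : Continuous (lift d) :=
  coe_liftAffine (d := d) ▸ (liftAffine d).continuous_of_finiteDimensional

/-- The action of the permutations of the homogeneous coordinates, read in the first `d`
coordinates. -/
noncomputable def simplexPerm (d : ℕ) :
    Equiv.Perm (Fin (d + 1)) →* ((Fin d → ℝ) →ᵃ[ℝ] (Fin d → ℝ)) where
  toFun σ := (LinearMap.funLeft ℝ ℝ fun i => σ.symm i.castSucc).toAffineMap.comp (liftAffine d)
  map_one' := by
    ext x i
    change liftAffine d x i.castSucc = x i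
    rw [coe_liftAffine, lift_castSucc]
  map_mul' σ τ := by
    ext x : 1
    change Fin.init (liftAffine d x ∘ τ.symm ∘ σ.symm) =
      Fin.init (liftAffine d (Fin.init (liftAffine d x ∘ τ.symm)) ∘ σ.symm)
    rw [coe_liftAffine, lift_init_lift_comp, Function.comp_assoc]

lemma simplexPerm_apply (σ : Equiv.Perm (Fin (d + 1))) (x : Fin d → ℝ) :
    simplexPerm d σ x = Fin.init (lift d x ∘ σ.symm) := by
  rw [← coe_liftAffine]
  rfl

lemma lift_simplexPerm (σ : Equiv.Perm (Fin (d + 1))) (x : Fin d → ℝ) :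
    lift d (simplexPerm d σ x) = lift d x ∘ σ.symm := by
  rw [simplexPerm_apply, lift_init_lift_comp]

lemma abs_det_linear_simplexPerm (σ : Equiv.Perm (Fin (d + 1))) :
    |LinearMap.det (simplexPerm d σ).linear| = 1 :=
  (MonoidHom.isOfFinOrder ((LinearMap.det.comp AffineMap.linearHom).comp (simplexPerm d))
    (isOfFinOrder_of_finite σ)).norm_eq_one

lemma measurePreserving_simplexPerm (σ : Equiv.Perm (Fin (d + 1))) :
    MeasurePreserving (simplexPerm d σ) := by
  have hdet := abs_det_linear_simplexPerm σ
  have hne : LinearMap.det (simplexPerm d σ).linear ≠ 0 := fun h => by simp [h] at hdet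
  have hlin : MeasurePreserving (simplexPerm d σ).linear := by
    refine ⟨(LinearMap.continuous_of_finiteDimensional _).measurable, ?_⟩
    rw [Real.map_linearMap_volume_pi_eq_smul_volume_pi hne, abs_inv, hdet]
    simp
  rw [AffineMap.decomp]
  exact (measurePreserving_add_right volume _).comp hlin

lemma measurableEmbedding_simplexPerm (σ : Equiv.Perm (Fin (d + 1))) :
    MeasurableEmbedding (simplexPerm d σ) := by
  refine ((simplexPerm d σ).continuous_of_finiteDimensional).measurableEmbedding
    (Function.LeftInverse.injective (g := simplexPerm d σ.symm) fun x => ?_)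
  rw [simplexPerm_apply, lift_simplexPerm]
  ext i
  simp [Fin.init, lift_castSucc]

lemma simplexPerm_mem_Td (σ : Equiv.Perm (Fin (d + 1))) {x : Fin d → ℝ} :
    simplexPerm d σ x ∈ Td d ↔ x ∈ Td d := by
  rw [mem_Td_iff, mem_Td_iff, lift_simplexPerm]
  exact (σ.symm.surjective.forall (p := fun i => 0 ≤ lift d x i)).symm

lemma preimage_simplexPerm_Td (σ : Equiv.Perm (Fin (d + 1))) :
    simplexPerm d σ ⁻¹' Td d = Td d :=
  Set.ext fun _ => simplexPerm_mem_Td σ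

lemma Wg_simplexPerm (γ : ℝ) (σ : Equiv.Perm (Fin (d + 1))) (x : Fin d → ℝ) :
    Wg d γ (simplexPerm d σ x) = Wg d γ x := by
  rw [Wg_eq_prod_lift_rpow, Wg_eq_prod_lift_rpow, lift_simplexPerm]
  exact congrArg (· ^ γ) (Equiv.prod_comp σ.symm (lift d x))

lemma setIntegral_comp_perm (γ : ℝ) (σ : Equiv.Perm (Fin (d + 1)))
    (g : (Fin (d + 1) → ℝ) → ℝ) :
    ∫ x in Td d, g (lift d x ∘ σ) * Wg d γ x = ∫ x in Td d, g (lift d x) * Wg d γ x := by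
  rw [← (measurePreserving_simplexPerm σ.symm).setIntegral_preimage_emb
    (measurableEmbedding_simplexPerm σ.symm) (fun x => g (lift d x) * Wg d γ x),
    preimage_simplexPerm_Td]
  simp only [lift_simplexPerm, Wg_simplexPerm, Equiv.symm_symm]

lemma isCompact_Td : IsCompact (Td d) := by
  have isClosed_Td : IsClosed (Td d) := by
    simp only [Td, Set.ofPred_and, Set.ofPred_forall]
    exact (isClosed_iInter fun i => isClosed_le continuous_const (continuous_apply i)).inter
      (isClosed_le (by fun_prop) continuous_const)
  refine isCompact_Icc.of_isClosed_subset isClosed_Td fun x hx =>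
    (⟨hx.1, fun i => ?_⟩ : x ∈ Set.Icc 0 1)
  exact (Finset.single_le_sum (fun j _ => hx.1 j) (mem_univ i)).trans hx.2

lemma integrableOn_prod_rpow {γ : ℝ} (hγ : -1 < γ) :
    IntegrableOn (fun x : Fin d → ℝ => ∏ i, x i ^ γ) (Set.Icc 0 1) := by
  have hone : IntegrableOn (fun t : ℝ => t ^ γ) (Set.Icc 0 1) := by
    rw [integrableOn_Icc_iff_integrableOn_Ioc, ← intervalIntegrable_iff_integrableOn_Ioc_of_le
      zero_le_one]
    exact intervalIntegral.intervalIntegrable_rpow' hγ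
  have hprod := Integrable.fintype_prod (ι := Fin d) (f := fun _ t => t ^ γ)
    (μ := fun _ => volume.restrict (Set.Icc (0 : ℝ) 1)) fun _ => hone
  rwa [← Measure.restrict_pi_pi, ← volume_pi, Set.pi_univ_Icc] at hprod

lemma integrableOn_Wg_of_le_last {γ : ℝ} (hγ : -1 < γ) {ε : ℝ} (hε : 0 < ε) :
    IntegrableOn (Wg d γ) (Td d ∩ {x | ε ≤ lift d x (Fin.last d)}) := by
  have hcont : Continuous fun x => lift d x (Fin.last d) :=
    (continuous_apply _).comp continuous_lift
  have hK : IsCompact (Td d ∩ {x | ε ≤ lift d x (Fin.last d)}) :=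
    isCompact_Td.inter_right (isClosed_le continuous_const hcont)
  have hprod : IntegrableOn (fun x : Fin d → ℝ => ∏ i, x i ^ γ)
      (Td d ∩ {x | ε ≤ lift d x (Fin.last d)}) := by
    refine (integrableOn_prod_rpow hγ).mono_set fun x hx => ⟨hx.1.1, fun i => ?_⟩
    exact (Finset.single_le_sum (fun j _ => hx.1.1 j) (mem_univ i)).trans hx.1.2
  have hlast : ContinuousOn (fun x => lift d x (Fin.last d) ^ γ)
      (Td d ∩ {x | ε ≤ lift d x (Fin.last d)}) :=
    hcont.continuousOn.rpow_const fun x hx => Or.inl (hε.trans_le hx.2).ne'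
  refine (hprod.continuousOn_mul hlast hK).congr_fun (fun x hx => ?_) hK.measurableSet
  dsimp only
  rw [Wg, lift_last, Real.mul_rpow (prod_nonneg fun i _ => hx.1.1 i) (sub_nonneg.2 hx.1.2),
    ← Real.finsetProd_rpow _ _ fun i _ => hx.1.1 i, mul_comm]

lemma integrableOn_Wg_of_le {γ : ℝ} (hγ : -1 < γ) {ε : ℝ} (hε : 0 < ε) (i : Fin (d + 1)) :
    IntegrableOn (Wg d γ) (Td d ∩ {x | ε ≤ lift d x i}) := by
  let σ := Equiv.swap i (Fin.last d)
  have h := ((measurePreserving_simplexPerm σ).integrableOn_comp_preimage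
    (measurableEmbedding_simplexPerm σ)).2 (integrableOn_Wg_of_le_last hγ hε)
  have hWg : Wg d γ ∘ simplexPerm d σ = Wg d γ := funext (Wg_simplexPerm γ σ)
  have hlast : simplexPerm d σ ⁻¹' {x | ε ≤ lift d x (Fin.last d)} = {x | ε ≤ lift d x i} := by
    ext x
    simp [lift_simplexPerm, σ]
  rwa [hWg, Set.preimage_inter, preimage_simplexPerm_Td, hlast] at h

-- Some homogeneous coordinate is at least `1 / (d + 1)`, and away from the other facets the
-- weight is dominated by a product of one-variable weights.
lemma integrableOn_Wg {γ : ℝ} (hγ : -1 < γ) : IntegrableOn (Wg d γ) (Td d) := by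
  have hε : (0 : ℝ) < (d + 1 : ℝ)⁻¹ := by positivity
  refine (integrableOn_finite_iUnion.2 fun i => integrableOn_Wg_of_le hγ hε i).mono_set
    fun x hx => ?_
  obtain ⟨i, -, hi⟩ : ∃ i ∈ univ, (d + 1 : ℝ)⁻¹ ≤ lift d x i := by
    refine Finset.exists_le_of_sum_le univ_nonempty (le_of_eq ?_)
    rw [sum_lift, Finset.sum_const, Finset.card_univ, Fintype.card_fin, nsmul_eq_mul,
      Nat.cast_succ, mul_inv_cancel₀ (by positivity)]
  exact Set.mem_iUnion.2 ⟨i, hx, hi⟩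

lemma integrableOn_comp_lift_mul_Wg {γ : ℝ} (hγ : -1 < γ) {g : (Fin (d + 1) → ℝ) → ℝ}
    (hg : Continuous g) : IntegrableOn (fun x => g (lift d x) * Wg d γ x) (Td d) :=
  (integrableOn_Wg hγ).continuousOn_mul (hg.comp continuous_lift).continuousOn isCompact_Td

end Simplex

section OrbitAverages

open MvPolynomial

variable {ι K : Type*} [Fintype ι] [DecidableEq ι] [Field K] [DecidableEq K]

/-- The average over the permutation orbit of the point `y`, as a functional on polynomials. -/
noncomputable def orbitAvgFunctional (y : ι → K) : MvPolynomial ι K →ₗ[K] K :=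
  ((permOrbit y).card : K)⁻¹ • ∑ z ∈ permOrbit y, (aeval z).toLinearMap

lemma orbitAvgFunctional_apply (y : ι → K) (f : MvPolynomial ι K) :
    orbitAvgFunctional y f = ((permOrbit y).card : K)⁻¹ * ∑ z ∈ permOrbit y, eval z f := by
  simp [orbitAvgFunctional]

lemma isPermInvariant_orbitAvgFunctional (y : ι → K) : IsPermInvariant (orbitAvgFunctional y) :=
  fun σ f => by
    simp only [orbitAvgFunctional_apply, eval_rename]
    rw [sum_permOrbit_comp y σ fun z => eval z f]

lemma orbitAvgFunctional_of_isSymmetric [CharZero K] (y : ι → K) {f : MvPolynomial ι K}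
    (hf : f.IsSymmetric) : orbitAvgFunctional y f = eval y f := by
  have hconst : ∀ z ∈ permOrbit y, eval z f = eval y f := fun z hz => by
    obtain ⟨σ, rfl⟩ := mem_permOrbit.1 hz
    exact eval_comp_of_isSymmetric hf y σ
  have hcard : ((permOrbit y).card : K) ≠ 0 :=
    Nat.cast_ne_zero.2 (Finset.card_pos.2 ⟨y, self_mem_permOrbit y⟩).ne'
  rw [orbitAvgFunctional_apply, Finset.sum_congr rfl hconst, Finset.sum_const, nsmul_eq_mul,
    inv_mul_cancel_left₀ hcard]

variable {κ : Type*} [Fintype κ]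

/-- The fully symmetric cubature rule whose nodes are the permutation orbits of the points `y j`,
the total weight `A j` being spread evenly over the orbit of `y j`. -/
noncomputable def orbitCubature (A : κ → K) (y : κ → ι → K) : MvPolynomial ι K →ₗ[K] K :=
  ∑ j, A j • orbitAvgFunctional (y j)

lemma orbitCubature_apply (A : κ → K) (y : κ → ι → K) (f : MvPolynomial ι K) :
    orbitCubature A y f = ∑ j, A j * orbitAvgFunctional (y j) f := by
  simp [orbitCubature]

lemma isPermInvariant_orbitCubature (A : κ → K) (y : κ → ι → K) :
    IsPermInvariant (orbitCubature A y) := fun σ f => by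
  simp only [orbitCubature_apply, isPermInvariant_orbitAvgFunctional _ σ f]

end OrbitAverages

section SimplexFunctional

open MvPolynomial

variable {d : ℕ} {γ : ℝ}

lemma eval_monomialSymm (β : Fin (d + 1) → ℕ) (x : Fin (d + 1) → ℝ) :
    eval x (monomialSymm ℝ β) = msymmEval d β x := by
  simp only [monomialSymm, map_sum, map_prod, map_pow, eval_X]
  rfl

/-- The normalized weighted integral over the simplex, in homogeneous coordinates, as a functional
on polynomials. -/
noncomputable def simplexFunctional (d : ℕ) (hγ : -1 < γ) :
    MvPolynomial (Fin (d + 1)) ℝ →ₗ[ℝ] ℝ where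
  toFun f := wg d γ * ∫ x in Td d, eval (lift d x) f * Wg d γ x
  map_add' f g := by
    simp only [map_add, add_mul]
    rw [integral_add (integrableOn_comp_lift_mul_Wg hγ f.continuous_eval)
      (integrableOn_comp_lift_mul_Wg hγ g.continuous_eval), mul_add]
  map_smul' c f := by
    simp only [smul_eval, mul_assoc, integral_const_mul, RingHom.id_apply, smul_eq_mul]
    ring

lemma isPermInvariant_simplexFunctional (hγ : -1 < γ) :
    IsPermInvariant (simplexFunctional d hγ) := fun σ f => by
  simp only [simplexFunctional, LinearMap.coe_mk, AddHom.coe_mk, eval_rename]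
  rw [setIntegral_comp_perm γ σ fun y => eval y f]

lemma momentS_eq_simplexFunctional (hγ : -1 < γ) (β : Fin (d + 1) → ℕ) :
    momentS d γ β = simplexFunctional d hγ (monomialSymm ℝ β) := by
  simp only [simplexFunctional, LinearMap.coe_mk, AddHom.coe_mk, eval_monomialSymm, momentS]

end SimplexFunctional

section Construction

open MvPolynomial

lemma weight_mul_eq_of_node_eq {p a A₆ M N : ℝ} (hp : p ≠ 0) (ha : a ≠ 0) (ha1 : a ≠ 1)
    (ha' : a + 1 ≠ 0) (hN : N ≠ 0) (hadef : a = (p - 1) / 2 * (M / N) - 1)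
    (hA₆ : A₆ = M / (p * a * (a - 1) ^ 2 * (a + 1))) :
    A₆ * (p * a * (a - 1) ^ 2 * (a + 1)) = M ∧ A₆ * (p * (p - 1) / 2 * a * (a - 1) ^ 2) = N := by
  have ha1' : a - 1 ≠ 0 := sub_ne_zero.2 ha1
  have hM : A₆ * (p * a * (a - 1) ^ 2 * (a + 1)) = M := by rw [hA₆]; field_simp
  have hMN : (a + 1) * N = (p - 1) / 2 * M := by
    rw [hadef]
    field_simp
    ring
  refine ⟨hM, mul_left_cancel₀ ha' ?_⟩
  linear_combination (p - 1) / 2 * hM - hMN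

variable {κ : Type*} [Fintype κ] {d : ℕ}

lemma IsPermInvariant.eq_sum_orbitAvg_of_msymmEval {L : MvPolynomial (Fin (d + 1)) ℝ →ₗ[ℝ] ℝ}
    (hL : IsPermInvariant L) {A : κ → ℝ} {y : κ → Fin (d + 1) → ℝ} {n : ℕ}
    (h : ∀ l : List ℕ, l.Pairwise (· ≥ ·) → 0 ∉ l → l.sum = n → l.length ≤ d + 1 →
      ∑ j, A j * msymmEval d (pvec d l) (y j) = L (monomialSymm ℝ (pvec d l)))
    {f : MvPolynomial (Fin (d + 1)) ℝ} (hf : f.IsHomogeneous n) :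
    L f = ∑ j, A j * orbitAvg d (y j) (fun z => eval z f) := by
  have hexact : L f = orbitCubature A y f := by
    refine hL.eq_of_eq_monomialSymm_pvec (isPermInvariant_orbitCubature A y) ?_ hf
    intro l hl h0 hsum hlen
    simp only [← h l hl h0 hsum hlen, orbitCubature_apply,
      orbitAvgFunctional_of_isSymmetric _ (isSymmetric_monomialSymm _), eval_monomialSymm]
  rw [hexact, orbitCubature_apply]
  simp only [orbitAvgFunctional_apply]
  rfl

variable {p : ℕ} {k : κ → ℕ} {A : κ → ℝ} {a A₆ : ℝ}

lemma cubature_three_two_of_four_one (hd : 1 ≤ d) (hp : p ≤ d) {m₄₁ m₃₂ : ℝ}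
    (hA₆ : A₆ * (p * a * (a - 1) ^ 2 * (a + 1)) = m₄₁ - m₃₂)
    (hmom : ∑ j, A j * msymmEval d (pvec d [4, 1]) (vk d (k j))
      + A₆ * msymmEval d (pvec d [4, 1]) (uap d a p) = m₄₁) :
    ∑ j, A j * msymmEval d (pvec d [3, 2]) (vk d (k j))
      + A₆ * msymmEval d (pvec d [3, 2]) (uap d a p) = m₃₂ := by
  simp only [msymmEval_vk_four_one hd] at hmom
  linear_combination hmom - hA₆ - A₆ * msymmEval_uap_four_one_sub hd hp a

lemma cubature_two_two_one_of_three_one_one (hd : 2 ≤ d) (hp : p ≤ d) {m₃₁₁ m₂₂₁ : ℝ}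
    (hA₆ : A₆ * (p * (p - 1) / 2 * a * (a - 1) ^ 2) = m₃₁₁ - m₂₂₁)
    (hmom : ∑ j, A j * msymmEval d (pvec d [3, 1, 1]) (vk d (k j))
      + A₆ * msymmEval d (pvec d [3, 1, 1]) (uap d a p) = m₃₁₁) :
    ∑ j, A j * msymmEval d (pvec d [2, 2, 1]) (vk d (k j))
      + A₆ * msymmEval d (pvec d [2, 2, 1]) (uap d a p) = m₂₂₁ := by
  simp only [msymmEval_vk_three_one_one hd] at hmom
  linear_combination hmom - hA₆ - A₆ * msymmEval_uap_three_one_one_sub hd hp a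

theorem cubature_index_five_construction_general (hd : 2 ≤ d) (hp0 : p ≠ 0) (hp : p ≤ d)
    {L : MvPolynomial (Fin (d + 1)) ℝ →ₗ[ℝ] ℝ} (hL : IsPermInvariant L)
    (hne : L (monomialSymm ℝ (pvec d [3, 1, 1])) ≠ L (monomialSymm ℝ (pvec d [2, 2, 1])))
    (hadef : a = ((p : ℝ) - 1) / 2 *
      ((L (monomialSymm ℝ (pvec d [4, 1])) - L (monomialSymm ℝ (pvec d [3, 2]))) /
        (L (monomialSymm ℝ (pvec d [3, 1, 1])) - L (monomialSymm ℝ (pvec d [2, 2, 1])))) - 1)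
    (ha : a ≠ 0) (ha1 : a ≠ 1) (ha' : a + 1 ≠ 0)
    (hA₆ : A₆ = (L (monomialSymm ℝ (pvec d [4, 1])) - L (monomialSymm ℝ (pvec d [3, 2]))) /
      (p * a * (a - 1) ^ 2 * (a + 1)))
    (hmom : ∀ l ∈ [[5], [4, 1], [3, 1, 1], [2, 1, 1, 1], [1, 1, 1, 1, 1]], l.length ≤ d + 1 →
      ∑ j, A j * msymmEval d (pvec d l) (vk d (k j)) + A₆ * msymmEval d (pvec d l) (uap d a p) =
        L (monomialSymm ℝ (pvec d l))) :
    (∀ l ∈ [[3, 2], [2, 2, 1]],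
      ∑ j, A j * msymmEval d (pvec d l) (vk d (k j)) + A₆ * msymmEval d (pvec d l) (uap d a p) =
        L (monomialSymm ℝ (pvec d l))) ∧
    ∀ f : MvPolynomial (Fin (d + 1)) ℝ, f.IsHomogeneous 5 →
      L f = ∑ j, A j * orbitAvg d (vk d (k j)) (fun z => eval z f)
        + A₆ * orbitAvg d (uap d a p) (fun z => eval z f) := by
  obtain ⟨h41, h311⟩ := weight_mul_eq_of_node_eq (Nat.cast_ne_zero.2 hp0) ha ha1 ha'
    (sub_ne_zero.2 hne) hadef hA₆
  have hmom' : ∀ l ∈ [[3, 2], [2, 2, 1]],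
      ∑ j, A j * msymmEval d (pvec d l) (vk d (k j)) + A₆ * msymmEval d (pvec d l) (uap d a p) =
        L (monomialSymm ℝ (pvec d l)) := by
    rw [List.forall_mem_cons, List.forall_mem_singleton]
    have hd1 : 1 ≤ d := one_le_two.trans hd
    exact ⟨cubature_three_two_of_four_one hd1 hp h41 (hmom [4, 1] (by simp) (by simpa using hd1)),
      cubature_two_two_one_of_three_one_one hd hp h311
        (hmom [3, 1, 1] (by simp) (by simpa using hd))⟩
  refine ⟨hmom', fun f hf => ?_⟩
  rw [hL.eq_sum_orbitAvg_of_msymmEval (A := fun o : Option κ => o.elim A₆ A)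
    (y := fun o => o.elim (uap d a p) fun j => vk d (k j)) (fun l hl h0 hsum hlen => ?_) hf]
  · rw [Fintype.sum_option, add_comm]
    rfl
  · rw [Fintype.sum_option, add_comm]
    exact (List.mem_append.1 (mem_partitions_five hl h0 hsum)).elim
      (fun h => hmom l h hlen) (hmom' l)

end Construction

/-- Construction of cubature rules of index `5` on `𝒯^{d+1}`: with `a` and `A_6` determined
by the moments as stated, if the moment equations hold for the partitions
`(5), (4,1), (3,1,1), (2,1,1,1), (1,1,1,1,1)`, then they also hold for `(3,2)` and `(2,2,1)`,
and the cubature rule is exact for all homogeneous polynomials of degree `5`. -/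
theorem cubature_index_five_construction
    (d : ℕ) (hd : 4 ≤ d) (γ : ℝ) (hγ : -1 < γ)
    (p : ℕ) (hp1 : 2 ≤ p) (hpd : p ≤ d)
    (hne : momentS d γ (pvec d [3, 1, 1]) ≠ momentS d γ (pvec d [2, 2, 1]))
    (a : ℝ)
    (hadef : a = ((p : ℝ) - 1) / 2 *
        ((momentS d γ (pvec d [4, 1]) - momentS d γ (pvec d [3, 2])) /
          (momentS d γ (pvec d [3, 1, 1]) - momentS d γ (pvec d [2, 2, 1]))) - 1)
    (ha : 0 < a) (ha1 : a ≠ 1)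
    (k : Fin 5 → ℕ) (hkinj : Function.Injective k)
    (hk1 : ∀ j, 1 ≤ k j) (hkd : ∀ j, k j ≤ d + 1)
    (A : Fin 5 → ℝ) (A6 : ℝ)
    (hA6 : A6 = (momentS d γ (pvec d [4, 1]) - momentS d γ (pvec d [3, 2])) /
        ((p : ℝ) * a * (a - 1) ^ 2 * (a + 1)))
    (hmom : ∀ l ∈ [[5], [4, 1], [3, 1, 1], [2, 1, 1, 1], [1, 1, 1, 1, 1]],
      ∑ j, A j * msymmEval d (pvec d l) (vk d (k j))
          + A6 * msymmEval d (pvec d l) (uap d a p)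
        = momentS d γ (pvec d l)) :
    (∀ l ∈ [[3, 2], [2, 2, 1]],
      ∑ j, A j * msymmEval d (pvec d l) (vk d (k j))
          + A6 * msymmEval d (pvec d l) (uap d a p)
        = momentS d γ (pvec d l))
    ∧
    (∀ f : MvPolynomial (Fin (d + 1)) ℝ, f.IsHomogeneous 5 →
      wg d γ * ∫ x in Td d, MvPolynomial.eval (lift d x) f * Wg d γ x
        = (∑ j, A j * orbitAvg d (vk d (k j)) (fun z => MvPolynomial.eval z f))
          + A6 * orbitAvg d (uap d a p) (fun z => MvPolynomial.eval z f)) := by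
  simp only [momentS_eq_simplexFunctional hγ] at hne hadef hA6 hmom ⊢
  exact cubature_index_five_construction_general (by omega) (by omega) hpd
    (isPermInvariant_simplexFunctional hγ) hne hadef ha.ne' ha1 (by positivity) hA6
    fun l hl _ => hmom l hl
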